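/- arXiv:2103.10004 — 2 statements merged into one kernel-verified Lean document; each statement's English description precedes it below -/
import Mathlib

section
/- The covering functional of the three-dimensional unit cross-polytope by six translates satisfies γ₆(K₁) = 2/3. -/
open Pointwise

/-- The unit cross-polytope in ℝ³. -/
def K1 : Set (Fin 3 → ℝ) := {x | |x 0| + |x 1| + |x 2| ≤ 1}

/-- `K1` can be covered by `m` translates of `lam • K1`. -/
def CoversWith (m : ℕ) (lam : ℝ) : Prop :=
  ∃ u : Fin m → (Fin 3 → ℝ), K1 ⊆ ⋃ i, (u i +ᵥ lam • K1)

/-!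
For `n ≥ 2`, the translates of ratio `1 - 1/n` centred at the `2n` points `± eᵢ / n` cover the
`n`-dimensional cross-polytope: a point `x` whose largest coordinate in absolute value is `xᵢ` lies
in the translate centred at `sign(xᵢ) eᵢ / n`. Conversely, the `2n` vertices and the centroid of a
facet are `2n + 1` points at mutual `ℓ¹`-distance at least `2(1 - 1/n)`. Two of them lie in the same
translate, which is an `ℓ¹`-ball of radius equal to the ratio.
-/

theorem le_two_mul_of_card_lt_of_forall_exists_dist_le {X κ τ : Type*} [PseudoMetricSpace X]
    [Fintype κ] [Fintype τ] {c : κ → X} {p : τ → X} {d r : ℝ}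
    (hcard : Fintype.card κ < Fintype.card τ) (hsep : Pairwise fun a b ↦ d ≤ dist (p a) (p b))
    (hcov : ∀ a, ∃ k, dist (p a) (c k) ≤ r) : d ≤ 2 * r := by
  choose f hf using hcov
  obtain ⟨a, b, hab, hfab⟩ := Fintype.exists_ne_map_eq_of_card_lt f hcard
  calc
    d ≤ dist (p a) (p b) := hsep hab
    _ ≤ dist (p a) (c (f a)) + dist (p b) (c (f a)) := dist_triangle_right ..
    _ ≤ 2 * r := by linarith [hf a, hfab ▸ hf b]

section HomotheticCover

variable {E : Type*} [AddCommGroup E] [Module ℝ E]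

/-- `K` is covered by `m` translates of `r • K`. The covering functional `γ_m(K)` is the least
positive `r` with this property. -/
def HasHomotheticCover (K : Set E) (m : ℕ) (r : ℝ) : Prop :=
  ∃ u : Fin m → E, K ⊆ ⋃ i, (u i +ᵥ r • K)

theorem hasHomotheticCover_card {κ : Type*} [Fintype κ] {K : Set E} {r : ℝ} (c : κ → E)
    (h : K ⊆ ⋃ k, (c k +ᵥ r • K)) : HasHomotheticCover K (Fintype.card κ) r :=
  ⟨c ∘ (Fintype.equivFin κ).symm,
    h.trans_eq ((Fintype.equivFin κ).symm.iSup_comp (g := fun k ↦ c k +ᵥ r • K)).symm⟩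

end HomotheticCover

theorem sum_abs_sub_single {ι G : Type*} [Fintype ι] [DecidableEq ι] [AddCommGroup G] [Lattice G]
    (x : ι → G) (i : ι) (a : G) :
    ∑ k, |x k - (Pi.single i a : ι → G) k| = |x i - a| + (∑ k, |x k| - |x i|) := by
  rw [← Finset.add_sum_erase _ _ (Finset.mem_univ i), Pi.single_eq_same,
    ← Finset.sum_erase_eq_sub (Finset.mem_univ i)]
  congr 1
  refine Finset.sum_congr rfl fun k hk ↦ ?_
  rw [Pi.single_eq_of_ne (Finset.ne_of_mem_erase hk), sub_zero]

/-- The standard cross-polytope in `ι → ℝ`, the closed unit ball of the `ℓ¹`-norm. It is not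
defined as a metric ball because `ι → ℝ` carries the sup norm. -/
def crossPolytope (ι : Type*) [Fintype ι] : Set (ι → ℝ) := {x | ∑ i, |x i| ≤ 1}

section CrossPolytope

variable {ι : Type*} [Fintype ι]

theorem mem_vadd_smul_crossPolytope {r : ℝ} (hr : 0 < r) {u x : ι → ℝ} :
    x ∈ u +ᵥ r • crossPolytope ι ↔ ∑ i, |x i - u i| ≤ r := by
  rw [Set.mem_vadd_set_iff_neg_vadd_mem, Set.mem_smul_set_iff_inv_smul_mem₀ hr.ne']
  simp only [crossPolytope, Set.mem_ofPred_eq, Pi.smul_apply, vadd_eq_add, neg_add_eq_sub,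
    Pi.sub_apply, smul_eq_mul, abs_mul, abs_inv, abs_of_pos hr, ← Finset.mul_sum,
    inv_mul_le_one₀ hr]

theorem one_sub_inv_card_pos [Nontrivial ι] : 0 < 1 - (Fintype.card ι : ℝ)⁻¹ :=
  sub_pos.mpr (inv_lt_one_of_one_lt₀ (Nat.one_lt_cast.mpr Fintype.one_lt_card))

theorem abs_abs_sub_inv_card_add_le [Nontrivial ι] {x : ι → ℝ} (hx : ∑ k, |x k| ≤ 1) {i : ι}
    (hi : ∀ k, |x k| ≤ |x i|) :
    |(|x i| - (Fintype.card ι : ℝ)⁻¹)| + (∑ k, |x k| - |x i|) ≤ 1 - (Fintype.card ι : ℝ)⁻¹ := by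
  rcases le_total (Fintype.card ι : ℝ)⁻¹ |x i| with hlarge | hsmall
  · rw [abs_of_nonneg (sub_nonneg.mpr hlarge)]
    linarith
  · rw [abs_of_nonpos (sub_nonpos.mpr hsmall)]
    set n : ℝ := (Fintype.card ι : ℝ) with hn
    have hn_two : 2 ≤ n := Nat.ofNat_le_cast.mpr Fintype.one_lt_card
    have hsum : ∑ k, |x k| ≤ n * |x i| := by
      simpa [hn] using Finset.sum_le_card_nsmul Finset.univ (fun k ↦ |x k|) |x i| fun k _ ↦ hi k
    calc
      -(|x i| - n⁻¹) + (∑ k, |x k| - |x i|) ≤ n⁻¹ + (n - 2) * |x i| := by linarith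
      _ ≤ n⁻¹ + (n - 2) * n⁻¹ := by gcongr
      _ = 1 - n⁻¹ := by field_simp; ring

variable (ι) in
/-- The centroid of the facet of the cross-polytope lying in the nonnegative orthant. -/
noncomputable def facetCentroid : ι → ℝ := fun _ ↦ (Fintype.card ι : ℝ)⁻¹

theorem sum_abs_facetCentroid [Nonempty ι] : ∑ i, |facetCentroid ι i| = 1 := by
  simp [facetCentroid]

variable [DecidableEq ι]

/-- The vertex `± eᵢ` of the cross-polytope, with the sign encoded as a unit of `ℤ`. -/
def crossPolytopeVertex (v : ι × ℤˣ) : ι → ℝ := Pi.single v.1 ((v.2 : ℤ) : ℝ)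

theorem sum_abs_crossPolytopeVertex (v : ι × ℤˣ) : ∑ k, |crossPolytopeVertex v k| = 1 := by
  simpa [abs_unit_intCast, crossPolytopeVertex] using sum_abs_sub_single 0 v.1 ((v.2 : ℤ) : ℝ)

theorem sum_abs_crossPolytopeVertex_sub_of_ne {v w : ι × ℤˣ} (h : v ≠ w) :
    ∑ k, |crossPolytopeVertex v k - crossPolytopeVertex w k| = 2 := by
  obtain ⟨i, s⟩ := v
  obtain ⟨j, t⟩ := w
  rw [crossPolytopeVertex.eq_def (j, t), sum_abs_sub_single, sum_abs_crossPolytopeVertex]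
  obtain hij | rfl := ne_or_eq j i
  · simp only [crossPolytopeVertex, Pi.single_eq_of_ne hij, zero_sub, abs_neg, abs_unit_intCast,
      abs_zero]
    norm_num
  · obtain rfl : s = -t := Int.units_ne_iff_eq_neg.mp fun hst ↦ h (hst ▸ rfl)
    have hdist : |-((t : ℤ) : ℝ) - ((t : ℤ) : ℝ)| = 2 := by
      rw [← neg_add', abs_neg, ← two_mul, abs_mul, abs_unit_intCast]
      norm_num
    simp [crossPolytopeVertex, hdist, abs_unit_intCast]

theorem le_sum_abs_facetCentroid_sub_crossPolytopeVertex (v : ι × ℤˣ) :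
    2 * (1 - (Fintype.card ι : ℝ)⁻¹) ≤ ∑ k, |facetCentroid ι k - crossPolytopeVertex v k| := by
  have : Nonempty ι := ⟨v.1⟩
  rw [crossPolytopeVertex, sum_abs_sub_single, sum_abs_facetCentroid]
  have habs : |facetCentroid ι v.1| = (Fintype.card ι : ℝ)⁻¹ := by simp [facetCentroid]
  have htri := abs_sub_abs_le_abs_sub ((v.2 : ℤ) : ℝ) (facetCentroid ι v.1)
  rw [abs_unit_intCast, abs_sub_comm, habs] at htri
  linarith

/-- The `2n + 1` points of the packing argument: `none` is the centroid of a facet, and `some v`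
is the vertex indexed by `v`. -/
noncomputable def separatedPoint (a : Option (ι × ℤˣ)) : ι → ℝ :=
  a.elim (facetCentroid ι) crossPolytopeVertex

theorem separatedPoint_mem_crossPolytope [Nonempty ι] (a : Option (ι × ℤˣ)) :
    separatedPoint a ∈ crossPolytope ι := by
  cases a with
  | none => exact sum_abs_facetCentroid.le
  | some v => exact (sum_abs_crossPolytopeVertex v).le

theorem pairwise_le_dist_separatedPoint :
    Pairwise fun a b : Option (ι × ℤˣ) ↦ 2 * (1 - (Fintype.card ι : ℝ)⁻¹) ≤
      dist (WithLp.toLp 1 (separatedPoint a)) (WithLp.toLp 1 (separatedPoint b)) := by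
  rintro (_ | v) (_ | w) hab
  · exact absurd rfl hab
  · rw [PiLp.dist_eq_of_L1]
    exact le_sum_abs_facetCentroid_sub_crossPolytopeVertex w
  · rw [dist_comm, PiLp.dist_eq_of_L1]
    exact le_sum_abs_facetCentroid_sub_crossPolytopeVertex v
  · have hdist := sum_abs_crossPolytopeVertex_sub_of_ne fun h ↦ hab (congrArg some h)
    rw [PiLp.dist_eq_of_L1]
    refine le_of_le_of_eq ?_ hdist.symm
    have : 0 ≤ (Fintype.card ι : ℝ)⁻¹ := by positivity
    linarith

theorem exists_sum_abs_sub_smul_crossPolytopeVertex_le [Nontrivial ι] {x : ι → ℝ}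
    (hx : x ∈ crossPolytope ι) :
    ∃ v, ∑ k, |x k - ((Fintype.card ι : ℝ)⁻¹ • crossPolytopeVertex v) k| ≤
      1 - (Fintype.card ι : ℝ)⁻¹ := by
  obtain ⟨i, hi⟩ := Finite.exists_max fun k ↦ |x k|
  obtain ⟨s, hs⟩ : ∃ s : ℤˣ, x i = |x i| * ((s : ℤ) : ℝ) := by
    rcases abs_choice (x i) with h | h
    · exact ⟨1, by simp [h]⟩
    · exact ⟨-1, by simp [h]⟩
  have hcoord (t : ℝ) : |x i - t * ((s : ℤ) : ℝ)| = |(|x i| - t)| := by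
    nth_rw 1 [hs]
    rw [← sub_mul, abs_mul, abs_unit_intCast, mul_one]
  refine ⟨(i, s), ?_⟩
  rw [crossPolytopeVertex, ← Pi.single_smul, sum_abs_sub_single, smul_eq_mul, hcoord]
  exact abs_abs_sub_inv_card_add_le hx hi

end CrossPolytope

section CoveringFunctional

variable {ι : Type*} [Fintype ι]

theorem hasHomotheticCover_crossPolytope [Nontrivial ι] :
    HasHomotheticCover (crossPolytope ι) (2 * Fintype.card ι) (1 - (Fintype.card ι : ℝ)⁻¹) := by
  classical
  have hcover : crossPolytope ι ⊆ ⋃ v : ι × ℤˣ, ((Fintype.card ι : ℝ)⁻¹ • crossPolytopeVertex v +ᵥ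
      (1 - (Fintype.card ι : ℝ)⁻¹) • crossPolytope ι) := by
    intro x hx
    obtain ⟨v, hv⟩ := exists_sum_abs_sub_smul_crossPolytopeVertex_le hx
    exact Set.mem_iUnion.mpr ⟨v, (mem_vadd_smul_crossPolytope one_sub_inv_card_pos).mpr hv⟩
  simpa only [Fintype.card_prod, Fintype.card_units_int, mul_comm] using
    hasHomotheticCover_card _ hcover

theorem le_of_hasHomotheticCover_crossPolytope [Nonempty ι] {m : ℕ} {r : ℝ} (hr : 0 < r)
    (hm : m ≤ 2 * Fintype.card ι) (h : HasHomotheticCover (crossPolytope ι) m r) :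
    1 - (Fintype.card ι : ℝ)⁻¹ ≤ r := by
  classical
  obtain ⟨u, hu⟩ := h
  have hcov (a : Option (ι × ℤˣ)) :
      ∃ k, dist (WithLp.toLp 1 (separatedPoint a)) (WithLp.toLp 1 (u k)) ≤ r := by
    obtain ⟨k, hk⟩ := Set.mem_iUnion.mp (hu (separatedPoint_mem_crossPolytope a))
    refine ⟨k, ?_⟩
    rw [PiLp.dist_eq_of_L1]
    exact (mem_vadd_smul_crossPolytope hr).mp hk
  have hcard : Fintype.card (Fin m) < Fintype.card (Option (ι × ℤˣ)) := by
    simp only [Fintype.card_fin, Fintype.card_option, Fintype.card_prod, Fintype.card_units_int]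
    omega
  linarith [le_two_mul_of_card_lt_of_forall_exists_dist_le hcard pairwise_le_dist_separatedPoint
    hcov]

theorem gamma_six_eq_two_thirds_general (ι : Type*) [Fintype ι] [Nontrivial ι] :
    IsLeast {r : ℝ | 0 < r ∧ HasHomotheticCover (crossPolytope ι) (2 * Fintype.card ι) r}
      (1 - (Fintype.card ι : ℝ)⁻¹) :=
  ⟨⟨one_sub_inv_card_pos, hasHomotheticCover_crossPolytope⟩,
    fun _ h ↦ le_of_hasHomotheticCover_crossPolytope h.1 le_rfl h.2⟩

end CoveringFunctional

theorem crossPolytope_fin_three : crossPolytope (Fin 3) = K1 := by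
  simp only [crossPolytope, K1, Fin.sum_univ_three]

theorem coversWith_iff_hasHomotheticCover_crossPolytope {m : ℕ} {lam : ℝ} :
    CoversWith m lam ↔ HasHomotheticCover (crossPolytope (Fin 3)) m lam := by
  rw [crossPolytope_fin_three]
  rfl

/-- γ₆(K₁) = 2/3. -/
theorem gamma_six_eq_two_thirds :
    IsLeast {lam : ℝ | 0 < lam ∧ CoversWith 6 lam} (2 / 3) := by
  have hratio : 1 - (Fintype.card (Fin 3) : ℝ)⁻¹ = 2 / 3 := by norm_num
  simp only [coversWith_iff_hasHomotheticCover_crossPolytope, ← hratio]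
  exact gamma_six_eq_two_thirds_general (Fin 3)
end

section
/- Let e = (1/5, 2/5, 2/5), f = (2/5, 1/5, 2/5), e′ = (1/5, 2/5, −2/5), f′ = (2/5, 1/5, −2/5) (these are 3/5-node points of the two adjacent facets conv{(0,0,1),(1,0,0),(0,1,0)} and conv{(0,0,−1),(1,0,0),(0,1,0)} of K₁). If a homothetic copy λK₁ + u (λ > 0, u ∈ ℝ³) contains all four points e, f, e′, f′, then λ ≥ 3/5. -/
open Pointwise

/-!
Two points of a homothetic copy `u + λ K₁` are at `ℓ¹`-distance at most `2 |λ|`, the `ℓ¹`-diameter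
of the copy. The points `e` and `f'` differ by `(-1/5, 1/5, 4/5)`, so their `ℓ¹`-distance is `6/5`.
-/

theorem seminorm_sub_le_of_mem_vadd_smul_closedBall {𝕜 E : Type*} [NormedDivisionRing 𝕜]
    [AddCommGroup E] [Module 𝕜 E] (p : Seminorm 𝕜 E) {c : 𝕜} {r : ℝ} {u x y : E}
    (hx : x ∈ u +ᵥ c • p.closedBall 0 r) (hy : y ∈ u +ᵥ c • p.closedBall 0 r) :
    p (x - y) ≤ 2 * (‖c‖ * r) := by
  have subset_closedBall : u +ᵥ c • p.closedBall 0 r ⊆ p.closedBall u (‖c‖ * r) :=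
    calc u +ᵥ c • p.closedBall 0 r ⊆ u +ᵥ p.closedBall 0 (‖c‖ * r) :=
          Set.vadd_set_mono Seminorm.smul_closedBall_subset
      _ = p.closedBall u (‖c‖ * r) := by rw [p.vadd_closedBall, vadd_eq_add, add_zero]
  have hxu : p (x - u) ≤ ‖c‖ * r := subset_closedBall hx
  have hyu : p (y - u) ≤ ‖c‖ * r := subset_closedBall hy
  calc p (x - y) ≤ p (x - u) + p (u - y) := le_map_sub_add_map_sub p x u y
    _ = p (x - u) + p (y - u) := by rw [map_sub_rev p u y]
    _ ≤ 2 * (‖c‖ * r) := by linarith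

/-- The `ℓ¹`-norm on `ι → ℝ`, whose unit ball is the cross-polytope; it is transported from `PiLp 1`
because the norm instance on `ι → ℝ` is the supremum norm. -/
noncomputable def l1Seminorm (ι : Type*) [Fintype ι] : Seminorm ℝ (ι → ℝ) :=
  (normSeminorm ℝ (PiLp 1 fun _ : ι => ℝ)).comp (WithLp.linearEquiv 1 ℝ (ι → ℝ)).symm.toLinearMap

theorem l1Seminorm_apply {ι : Type*} [Fintype ι] (x : ι → ℝ) : l1Seminorm ι x = ∑ i, |x i| :=
  PiLp.norm_eq_of_L1 (WithLp.toLp 1 x)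

theorem K1_eq_closedBall : K1 = (l1Seminorm (Fin 3)).closedBall 0 1 := by
  ext x
  rw [Seminorm.mem_closedBall_zero, l1Seminorm_apply, Fin.sum_univ_three]
  rfl

theorem sum_abs_sub_le_of_mem_vadd_smul_K1 {c : ℝ} {u x y : Fin 3 → ℝ}
    (hx : x ∈ u +ᵥ c • K1) (hy : y ∈ u +ᵥ c • K1) :
    ∑ i, |x i - y i| ≤ 2 * |c| := by
  rw [K1_eq_closedBall] at hx hy
  simpa only [l1Seminorm_apply, Pi.sub_apply, Real.norm_eq_abs, mul_one] using
    seminorm_sub_le_of_mem_vadd_smul_closedBall (l1Seminorm (Fin 3)) hx hy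

theorem ratio_ge_three_fifths_of_four_node_points_general {lam : ℝ} {u : Fin 3 → ℝ}
    (he : ![1 / 5, 2 / 5, 2 / 5] ∈ u +ᵥ lam • K1)
    (hf' : ![2 / 5, 1 / 5, -(2 / 5)] ∈ u +ᵥ lam • K1) :
    3 / 5 ≤ |lam| := by
  have dist_le := sum_abs_sub_le_of_mem_vadd_smul_K1 he hf'
  have dist_eq :
      ∑ i, |(![1 / 5, 2 / 5, 2 / 5] : Fin 3 → ℝ) i - ![2 / 5, 1 / 5, -(2 / 5)] i| = 6 / 5 := by
    simp only [Fin.sum_univ_three, Matrix.cons_val]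
    norm_num [abs_of_neg]
  linarith

/-- If a homothetic copy `λ • K1 + u` contains the four 3/5-node points
`e = (1/5, 2/5, 2/5)`, `f = (2/5, 1/5, 2/5)`, `e' = (1/5, 2/5, -2/5)`,
`f' = (2/5, 1/5, -2/5)` of two adjacent facets of `K1`, then `λ ≥ 3/5`. -/
theorem ratio_ge_three_fifths_of_four_node_points
    (lam : ℝ) (hlam : 0 < lam) (u : Fin 3 → ℝ)
    (he : ![(1 : ℝ)/5, 2/5, 2/5] ∈ u +ᵥ lam • K1)
    (hf : ![(2 : ℝ)/5, 1/5, 2/5] ∈ u +ᵥ lam • K1)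
    (he' : ![(1 : ℝ)/5, 2/5, -(2/5)] ∈ u +ᵥ lam • K1)
    (hf' : ![(2 : ℝ)/5, 1/5, -(2/5)] ∈ u +ᵥ lam • K1) :
    3 / 5 ≤ lam := by
  rw [← abs_of_pos hlam]
  exact ratio_ge_three_fifths_of_four_node_points_general he hf'
end
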